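/- Let X be a locally compact Polish space and let G be a bounded group of lattice isomorphisms of C₀(X), with weights a_g and homeomorphisms φ_g (g ∈ G), such that: (i) both families {a_g : g ∈ G} and {φ_g : g ∈ G} are equicontinuous on every compact subset of X; (ii) for every t ∈ X the orbit {φ_g(t) : g ∈ G} is nowhere dense in X; (iii) G is relatively SOT-closed, meaning that whenever a sequence (gₙ) ⊂ G converges in the strong operator topology to a lattice isomorphism T of C₀(X), then T ∈ G. Let m_G : X → (0,∞) be the continuous function m_G(t) = (inf_{g ∈ G} a_g(t))⁻¹. Then there exists a lattice norm N on C₀(X), equivalent to the supremum norm, such that the group of lattice isomorphisms T of C₀(X) satisfying N(T x) = N(x) for all x is exactly {x ↦ m_G · g(m_G⁻¹ · x) : g ∈ G}. -/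

import Mathlib

open ZeroAtInfty Filter Topology Metric

noncomputable section

/-- Pointwise supremum of two continuous functions vanishing at infinity. -/
def c0sup {X : Type*} [TopologicalSpace X] (f g : C₀(X, ℝ)) : C₀(X, ℝ) where
  toFun := fun t => max (f t) (g t)
  continuous_toFun := (map_continuous f).max (map_continuous g)
  zero_at_infty' := by simpa using (zero_at_infty f).max (zero_at_infty g)

/-!
Since the infimum `w` of the weights satisfies `w = a g * (w ∘ φ g)`, multiplication by `w⁻¹`
conjugates `G` to the group of composition operators with the homeomorphisms in `Γ = φ(G)`, and it
suffices to find a lattice norm whose isometries are exactly these. Take the maximum of the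
supremum norm and, over all `γ ∈ Γ`, of the sums `∑ n, c n * |x (γ (t n))|`, where `t` is an
injective dense sequence starting at a point with nowhere dense orbit and the weights `c n` decay
very fast. This norm is `Γ`-invariant.

Conversely, let `T f = b * (f ∘ ψ)` be isometric. On functions supported off the closure of the
orbit of `t 0` the norm is the supremum norm, which forces `b ≤ 1` on a dense set and hence
everywhere; the same bound for `T⁻¹` yields `b = 1`. Testing the norm on functions with rapidly
decreasing steps at `ψ (t 0), …, ψ (t k)` then shows that some element of `Γ` is close to `ψ` on
`t 0, …, t k`. By equicontinuity these elements converge to `ψ`, and the corresponding elements of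
`G` converge strongly; since `G` is relatively closed, `ψ ∈ Γ`.
-/

section ContinuousFunctionsVanishingAtInfinity

variable {X : Type*} [TopologicalSpace X]

theorem c0sup_apply (f g : C₀(X, ℝ)) (t : X) : c0sup f g t = max (f t) (g t) := rfl

theorem abs_apply_le_norm (f : C₀(X, ℝ)) (t : X) : |f t| ≤ ‖f‖ :=
  f.toBCF.norm_coe_le_norm t

theorem norm_le_of_forall_abs_apply_le {f : C₀(X, ℝ)} {r : ℝ} (hr : 0 ≤ r)
    (h : ∀ t, |f t| ≤ r) : ‖f‖ ≤ r :=
  (BoundedContinuousFunction.norm_le hr).2 h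

theorem norm_le_norm_of_forall_abs_le {f g : C₀(X, ℝ)} (h : ∀ t, |f t| ≤ |g t|) : ‖f‖ ≤ ‖g‖ :=
  norm_le_of_forall_abs_apply_le (norm_nonneg g) fun t => (h t).trans (abs_apply_le_norm g t)

theorem norm_eq_norm_of_surjective {f g : C₀(X, ℝ)} {ψ : X → X} (hψ : Function.Surjective ψ)
    (h : ∀ t, g t = f (ψ t)) : ‖g‖ = ‖f‖ := by
  refine le_antisymm (norm_le_of_forall_abs_apply_le (norm_nonneg f) fun t => ?_)
    (norm_le_of_forall_abs_apply_le (norm_nonneg g) fun t => ?_)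
  · exact h t ▸ abs_apply_le_norm f (ψ t)
  · obtain ⟨s, rfl⟩ := hψ t
    exact h s ▸ abs_apply_le_norm g s

theorem isCompact_setOf_le_abs (f : C₀(X, ℝ)) {ε : ℝ} (hε : 0 < ε) :
    IsCompact {t | ε ≤ |f t|} := by
  have hsmall : ∀ᶠ t in cocompact X, |f t| < ε := by
    simpa using (zero_at_infty f).abs.eventually_lt_const (by simpa using hε)
  obtain ⟨K, hK, hKf⟩ := mem_cocompact.1 hsmall
  refine hK.of_isClosed_subset (isClosed_le continuous_const (map_continuous f).abs)
    fun t (ht : ε ≤ |f t|) => ?_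
  by_contra htK
  exact ht.not_gt (hKf htK)

theorem exists_c0_bump [T2Space X] [LocallyCompactSpace X] {K U : Set X} (hK : IsCompact K)
    (hU : IsOpen U) (hKU : K ⊆ U) :
    ∃ f : C₀(X, ℝ), (∀ t, f t ∈ Set.Icc 0 1) ∧ (∀ t ∈ K, f t = 1) ∧ ∀ t ∉ U, f t = 0 := by
  obtain ⟨f, hf1, hf0, hfc, hfI⟩ := exists_continuous_one_zero_of_isCompact hK hU.isClosed_compl
    (Set.disjoint_compl_right_iff_subset.2 hKU)
  exact ⟨⟨f, hfc.is_zero_at_infty⟩, hfI, fun t ht => hf1 ht, fun t ht => hf0 ht⟩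

theorem exists_c0_bump_at [T2Space X] [LocallyCompactSpace X] {s : X} {U : Set X}
    (hU : IsOpen U) (hs : s ∈ U) :
    ∃ f : C₀(X, ℝ), (∀ t, f t ∈ Set.Icc 0 1) ∧ f s = 1 ∧ ∀ t ∉ U, f t = 0 := by
  simpa using exists_c0_bump isCompact_singleton hU (Set.singleton_subset_iff.2 hs)

end ContinuousFunctionsVanishingAtInfinity

section LatticeHomomorphisms

variable {X : Type*} [TopologicalSpace X]

theorem map_neg_c0sup_neg {l : C₀(X, ℝ) →L[ℝ] ℝ}
    (hl : ∀ f g, l (c0sup f g) = max (l f) (l g)) (f g : C₀(X, ℝ)) :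
    l (-c0sup (-f) (-g)) = min (l f) (l g) := by
  rw [map_neg, hl, map_neg, map_neg, max_neg_neg, neg_neg]

theorem neg_c0sup_neg_apply (f g : C₀(X, ℝ)) (t : X) :
    (-c0sup (-f) (-g)) t = min (f t) (g t) := by
  simp [c0sup_apply, max_neg_neg]

theorem exists_map_eq_one_lt_on_compact {l : C₀(X, ℝ) →L[ℝ] ℝ}
    (hl : ∀ f g, l (c0sup f g) = max (l f) (l g)) (hker : ∀ s, ∃ f, f s = 0 ∧ l f = 1)
    {f₀ : C₀(X, ℝ)} (hf₀ : l f₀ = 1) {ε : ℝ} (hε : 0 < ε) {K : Set X} (hK : IsCompact K) :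
    ∃ h, l h = 1 ∧ (∀ t, h t ≤ f₀ t) ∧ ∀ t ∈ K, h t < ε := by
  refine hK.induction_on (p := fun S => ∃ h, l h = 1 ∧ (∀ t, h t ≤ f₀ t) ∧ ∀ t ∈ S, h t < ε)
    ⟨f₀, hf₀, fun _ => le_rfl, by simp⟩ ?_ ?_ ?_
  · rintro S S' hSS' ⟨h, h1, hle, hlt⟩
    exact ⟨h, h1, hle, fun t ht => hlt t (hSS' ht)⟩
  · rintro S S' ⟨h, h1, hle, hlt⟩ ⟨h', h1', -, hlt'⟩
    refine ⟨-c0sup (-h) (-h'), by rw [map_neg_c0sup_neg hl, h1, h1', min_self], fun t => ?_, ?_⟩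
    · exact neg_c0sup_neg_apply h h' t ▸ min_le_of_left_le (hle t)
    · rintro t (ht | ht) <;> rw [neg_c0sup_neg_apply]
      · exact min_lt_of_left_lt (hlt t ht)
      · exact min_lt_of_right_lt (hlt' t ht)
  · intro s _
    obtain ⟨f, hfs, hf⟩ := hker s
    have hnear : ∀ᶠ t in 𝓝 s, f t < ε :=
      (map_continuous f).continuousAt.eventually_lt_const (hfs ▸ hε)
    refine ⟨_, mem_nhdsWithin_of_mem_nhds hnear, -c0sup (-f₀) (-f), ?_, fun t => ?_, fun t ht => ?_⟩
    · rw [map_neg_c0sup_neg hl, hf₀, hf, min_self]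
    · exact neg_c0sup_neg_apply f₀ f t ▸ min_le_left _ _
    · exact neg_c0sup_neg_apply f₀ f t ▸ min_lt_of_right_lt ht

/- Otherwise compactness of `{ε ≤ |f₀|}` produces functions of norm at most `ε` on which `l` takes
the value one. -/
theorem exists_forall_map_eq_zero_of_apply_eq_zero {l : C₀(X, ℝ) →L[ℝ] ℝ}
    (hl : ∀ f g, l (c0sup f g) = max (l f) (l g)) (hl0 : l ≠ 0) :
    ∃ s, ∀ f : C₀(X, ℝ), f s = 0 → l f = 0 := by
  by_contra! hne
  have hker : ∀ s, ∃ f, f s = 0 ∧ l f = 1 := fun s => by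
    obtain ⟨f, hfs, hf⟩ := hne s
    exact ⟨(l f)⁻¹ • f, by simp [hfs], by simp [hf]⟩
  obtain ⟨f, hf⟩ := DFunLike.ne_iff.1 hl0
  have hf₀ : l ((l f)⁻¹ • f) = 1 := by simpa using inv_mul_cancel₀ hf
  set f₀ := (l f)⁻¹ • f
  set ε : ℝ := (‖l‖ + 1)⁻¹
  have hε : 0 < ε := by positivity
  obtain ⟨h, hh1, hle, hlt⟩ :=
    exists_map_eq_one_lt_on_compact hl hker hf₀ hε (isCompact_setOf_le_abs f₀ hε)
  have hnorm : ‖c0sup h 0‖ ≤ ε := by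
    refine norm_le_of_forall_abs_apply_le hε.le fun t => ?_
    rw [c0sup_apply, ZeroAtInftyContinuousMap.zero_apply, abs_of_nonneg (le_max_right _ _)]
    refine max_le ?_ hε.le
    by_cases ht : ε ≤ |f₀ t|
    · exact (hlt t ht).le
    · exact (hle t).trans ((le_abs_self _).trans (not_le.1 ht).le)
  have hone : l (c0sup h 0) = 1 := by simp [hl, hh1]
  have : (1 : ℝ) < 1 := calc
    (1 : ℝ) = ‖l (c0sup h 0)‖ := by simp [hone]
    _ ≤ ‖l‖ * ε := l.le_opNorm_of_le hnorm
    _ < (‖l‖ + 1) * ε := by gcongr; linarith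
    _ = 1 := mul_inv_cancel₀ (by positivity)
  exact this.false

theorem exists_eq_const_mul_apply {l : C₀(X, ℝ) →L[ℝ] ℝ}
    (hl : ∀ f g, l (c0sup f g) = max (l f) (l g)) (hl0 : l ≠ 0) :
    ∃ c > 0, ∃ s, ∀ f, l f = c * f s := by
  obtain ⟨s, hs⟩ := exists_forall_map_eq_zero_of_apply_eq_zero hl hl0
  obtain ⟨f, hf⟩ := DFunLike.ne_iff.1 hl0
  have hfs : f s ≠ 0 := fun h => hf (hs f h)
  have hrep : ∀ g, l g = l f / f s * g s := fun g => by
    have := hs (g - (g s / f s) • f) (by simp [hfs])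
    rw [map_sub, map_smul, smul_eq_mul, sub_eq_zero] at this
    rw [this]; ring
  refine ⟨l f / f s, ?_, s, hrep⟩
  have habs : |l f| = l f / f s * |f s| := by
    rw [abs_eq_max_neg, ← map_neg, ← hl, hrep, abs_eq_max_neg]; rfl
  exact pos_of_mul_pos_left (habs ▸ abs_pos.2 hf) (abs_nonneg _)

theorem map_symm_c0sup {T : C₀(X, ℝ) ≃L[ℝ] C₀(X, ℝ)}
    (hT : ∀ f g : C₀(X, ℝ), T (c0sup f g) = c0sup (T f) (T g)) (f g : C₀(X, ℝ)) :
    T.symm (c0sup f g) = c0sup (T.symm f) (T.symm g) :=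
  T.injective (by rw [hT]; simp)

variable [T2Space X] [LocallyCompactSpace X]

theorem eq_and_eq_of_forall_mul_apply_eq {c d : ℝ} {s t : X} (hc : c ≠ 0)
    (h : ∀ f : C₀(X, ℝ), c * f s = d * f t) : s = t ∧ c = d := by
  have hst : s = t := by
    by_contra hne
    obtain ⟨f, -, hfs, hf0⟩ := exists_c0_bump_at isOpen_compl_singleton (s := s) (U := {t}ᶜ) hne
    exact hc (by simpa [hfs, hf0] using h f)
  subst hst
  obtain ⟨f, -, hfs, -⟩ := exists_c0_bump_at isOpen_univ (Set.mem_univ s)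
  exact ⟨rfl, by simpa [hfs] using h f⟩

theorem continuous_of_forall_apply_eq_mul {T : C₀(X, ℝ) → C₀(X, ℝ)} {b : X → ℝ} {ψ : X → X}
    (hb : ∀ t, b t ≠ 0) (hT : ∀ f t, T f t = b t * f (ψ t)) : Continuous ψ := by
  refine continuous_iff_continuousAt.2 fun t => _root_.tendsto_nhds.2 fun U hU ht => ?_
  obtain ⟨f, -, hft, hf0⟩ := exists_c0_bump_at hU ht
  have hne : T f t ≠ 0 := by rw [hT, hft, mul_one]; exact hb t
  filter_upwards [(map_continuous (T f)).continuousAt.eventually_ne hne] with s hs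
  by_contra hsU
  exact hs (by rw [hT, hf0 _ hsU, mul_zero])

theorem exists_apply_eq_mul_of_map_c0sup (T : C₀(X, ℝ) ≃L[ℝ] C₀(X, ℝ))
    (hT : ∀ f g : C₀(X, ℝ), T (c0sup f g) = c0sup (T f) (T g)) :
    ∃ (b : X → ℝ) (ψ : X → X), (∀ t, 0 < b t) ∧ ∀ f t, T f t = b t * f (ψ t) := by
  have hpoint : ∀ t, ∃ c > 0, ∃ s, ∀ f, T f t = c * f s := fun t => by
    obtain ⟨e, -, het, -⟩ := exists_c0_bump_at isOpen_univ (Set.mem_univ t)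
    let ev : C₀(X, ℝ) →L[ℝ] ℝ := LinearMap.mkContinuous
      { toFun := fun f => f t, map_add' := fun _ _ => rfl, map_smul' := fun _ _ => rfl } 1
      fun f => (one_mul ‖f‖).symm ▸ abs_apply_le_norm f t
    refine exists_eq_const_mul_apply (l := ev.comp (T : C₀(X, ℝ) →L[ℝ] C₀(X, ℝ)))
      (fun f g => congrArg ev (hT f g)) fun h0 => ?_
    have : T (T.symm e) t = 0 := DFunLike.congr_fun h0 (T.symm e)
    simp [het] at this
  choose b hb ψ hψ using hpoint
  exact ⟨b, ψ, hb, fun f t => hψ t f⟩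

theorem exists_homeomorph_apply_eq_mul_of_map_c0sup (T : C₀(X, ℝ) ≃L[ℝ] C₀(X, ℝ))
    (hT : ∀ f g : C₀(X, ℝ), T (c0sup f g) = c0sup (T f) (T g)) :
    ∃ (b b' : X → ℝ) (ψ : X ≃ₜ X), (∀ t, 0 < b t) ∧ (∀ t, b t * b' (ψ t) = 1) ∧
      (∀ f t, T f t = b t * f (ψ t)) ∧ ∀ f t, T.symm f t = b' t * f (ψ.symm t) := by
  obtain ⟨b, ψ, hb, hrep⟩ := exists_apply_eq_mul_of_map_c0sup T hT
  obtain ⟨b', ψ', hb', hrep'⟩ := exists_apply_eq_mul_of_map_c0sup T.symm (map_symm_c0sup hT)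
  have hleft : ∀ t, t = ψ' (ψ t) ∧ 1 = b t * b' (ψ t) := fun t =>
    eq_and_eq_of_forall_mul_apply_eq one_ne_zero fun f => by
      rw [one_mul, mul_assoc, ← hrep', ← hrep, T.apply_symm_apply]
  have hright : ∀ t, t = ψ (ψ' t) ∧ 1 = b' t * b (ψ' t) := fun t =>
    eq_and_eq_of_forall_mul_apply_eq one_ne_zero fun f => by
      rw [one_mul, mul_assoc, ← hrep, ← hrep', T.symm_apply_apply]
  exact ⟨b, b', ⟨⟨ψ, ψ', fun t => (hleft t).1.symm, fun t => (hright t).1.symm⟩,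
    continuous_of_forall_apply_eq_mul (fun t => (hb t).ne') hrep,
    continuous_of_forall_apply_eq_mul (fun t => (hb' t).ne') hrep'⟩,
    hb, fun t => (hleft t).2.symm, hrep, hrep'⟩

end LatticeHomomorphisms

section SampleWeight

/-- The weights of the sampling seminorms below. They decay fast enough for each weight to dominate
the sum of all later ones, with a factor to spare that itself decays geometrically. -/
def sampleWeight (n : ℕ) : ℝ := 2 * (1 / 8) ^ n ^ 2

theorem sampleWeight_pos (n : ℕ) : 0 < sampleWeight n := by
  unfold sampleWeight; positivity

theorem sampleWeight_zero : sampleWeight 0 = 2 := by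
  norm_num [sampleWeight]

theorem antitone_sampleWeight : Antitone sampleWeight := fun m n hmn => by
  unfold sampleWeight
  gcongr ?_ * ?_
  exact pow_le_pow_of_le_one (by norm_num) (by norm_num) (by gcongr)

theorem sampleWeight_add_add_one_le (n k : ℕ) :
    sampleWeight (n + (k + 1)) ≤ sampleWeight k * (1 / 4) ^ (k + 1) / 2 / 2 ^ n := by
  have hexp : k ^ 2 + (k + 1) + n ≤ (n + (k + 1)) ^ 2 := by nlinarith
  calc sampleWeight (n + (k + 1)) ≤ 2 * (1 / 8) ^ (k ^ 2 + (k + 1) + n) := by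
        unfold sampleWeight
        gcongr 2 * ?_
        exact pow_le_pow_of_le_one (by norm_num) (by norm_num) hexp
    _ = sampleWeight k * (1 / 4) ^ (k + 1) * (1 / 2) ^ (k + 1) * (1 / 8) ^ n := by
        rw [sampleWeight, mul_assoc _ ((1 / 4 : ℝ) ^ (k + 1)), ← mul_pow]; norm_num; ring
    _ ≤ sampleWeight k * (1 / 4) ^ (k + 1) * (1 / 2) * (1 / 2) ^ n := by
        have := sampleWeight_pos k
        gcongr
        · exact pow_le_of_le_one (by norm_num) (by norm_num) k.succ_ne_zero
        · norm_num
    _ = sampleWeight k * (1 / 4) ^ (k + 1) / 2 / 2 ^ n := by rw [one_div_pow (2 : ℝ)]; ring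

theorem summable_sampleWeight : Summable sampleWeight :=
  (summable_nat_add_iff 1).1 <| (summable_geometric_two' _).of_nonneg_of_le
    (fun _ => (sampleWeight_pos _).le) fun n => sampleWeight_add_add_one_le n 0

theorem tsum_sampleWeight_add_add_one_le (k : ℕ) :
    ∑' n, sampleWeight (n + (k + 1)) ≤ sampleWeight k * (1 / 4) ^ (k + 1) := calc
  _ ≤ ∑' n, sampleWeight k * (1 / 4) ^ (k + 1) / 2 / 2 ^ n :=
    ((summable_nat_add_iff (k + 1)).2 summable_sampleWeight).tsum_le_tsum
      (sampleWeight_add_add_one_le · k) (summable_geometric_two' _)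
  _ = sampleWeight k * (1 / 4) ^ (k + 1) := tsum_geometric_two' _

end SampleWeight

section SampleSeminorm

variable {X : Type*} [TopologicalSpace X]

theorem summable_sampleWeight_mul_abs (p : ℕ → X) (x : C₀(X, ℝ)) :
    Summable fun n => sampleWeight n * |x (p n)| :=
  (summable_sampleWeight.mul_right ‖x‖).of_nonneg_of_le
    (fun n => mul_nonneg (sampleWeight_pos n).le (abs_nonneg _))
    fun n => mul_le_mul_of_nonneg_left (abs_apply_le_norm x _) (sampleWeight_pos n).le

/-- The rapidly weighted sum of the absolute values of a function along a sequence of points. -/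
def sampleSeminorm (p : ℕ → X) : Seminorm ℝ C₀(X, ℝ) :=
  Seminorm.of (fun x => ∑' n, sampleWeight n * |x (p n)|)
    (fun x y => by
      rw [← (summable_sampleWeight_mul_abs p x).tsum_add (summable_sampleWeight_mul_abs p y)]
      refine (summable_sampleWeight_mul_abs p _).tsum_le_tsum (fun n => ?_)
        ((summable_sampleWeight_mul_abs p x).add (summable_sampleWeight_mul_abs p y))
      rw [← mul_add]
      exact mul_le_mul_of_nonneg_left (abs_add_le _ _) (sampleWeight_pos n).le)
    fun c x => by
      rw [← tsum_mul_left]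
      refine tsum_congr fun n => ?_
      rw [ZeroAtInftyContinuousMap.smul_apply, smul_eq_mul, abs_mul, Real.norm_eq_abs,
        mul_left_comm]

theorem sampleSeminorm_apply (p : ℕ → X) (x : C₀(X, ℝ)) :
    sampleSeminorm p x = ∑' n, sampleWeight n * |x (p n)| := rfl

theorem sampleSeminorm_mono (p : ℕ → X) {x y : C₀(X, ℝ)} (h : ∀ t, |x t| ≤ |y t|) :
    sampleSeminorm p x ≤ sampleSeminorm p y :=
  (summable_sampleWeight_mul_abs p x).tsum_le_tsum
    (fun n => mul_le_mul_of_nonneg_left (h _) (sampleWeight_pos n).le)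
    (summable_sampleWeight_mul_abs p y)

theorem sum_range_le_sampleSeminorm (p : ℕ → X) (x : C₀(X, ℝ)) (k : ℕ) :
    ∑ n ∈ Finset.range k, sampleWeight n * |x (p n)| ≤ sampleSeminorm p x :=
  (summable_sampleWeight_mul_abs p x).sum_le_tsum _
    fun n _ => mul_nonneg (sampleWeight_pos n).le (abs_nonneg _)

theorem sampleSeminorm_le_sum_range_add (p : ℕ → X) (x : C₀(X, ℝ)) (k : ℕ) :
    sampleSeminorm p x ≤ ∑ n ∈ Finset.range k, sampleWeight n * |x (p n)| +
      sampleWeight k * (|x (p k)| + (1 / 4) ^ (k + 1) * ‖x‖) := by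
  have hsum := summable_sampleWeight_mul_abs p x
  have htail : ∑' n, sampleWeight (n + (k + 1)) * |x (p (n + (k + 1)))| ≤
      sampleWeight k * (1 / 4) ^ (k + 1) * ‖x‖ := calc
    _ ≤ ∑' n, sampleWeight (n + (k + 1)) * ‖x‖ :=
      ((summable_nat_add_iff (k + 1)).2 hsum).tsum_le_tsum
        (fun n => mul_le_mul_of_nonneg_left (abs_apply_le_norm x _) (sampleWeight_pos _).le)
        (((summable_nat_add_iff (k + 1)).2 summable_sampleWeight).mul_right ‖x‖)
    _ ≤ _ := by
      rw [tsum_mul_right]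
      exact mul_le_mul_of_nonneg_right (tsum_sampleWeight_add_add_one_le k) (norm_nonneg x)
  rw [sampleSeminorm_apply, ← hsum.sum_add_tsum_nat_add (k + 1), Finset.sum_range_succ]
  linarith

theorem sampleSeminorm_le_three_mul_norm (p : ℕ → X) (x : C₀(X, ℝ)) :
    sampleSeminorm p x ≤ 3 * ‖x‖ := by
  have h := sampleSeminorm_le_sum_range_add p x 0
  simp only [Finset.range_zero, Finset.sum_empty, sampleWeight_zero, zero_add, pow_one] at h
  linarith [abs_apply_le_norm x (p 0), norm_nonneg x]

theorem sampleSeminorm_le_norm_of_apply_zero_eq_zero {p : ℕ → X} {x : C₀(X, ℝ)}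
    (h0 : x (p 0) = 0) : sampleSeminorm p x ≤ ‖x‖ := by
  have h := sampleSeminorm_le_sum_range_add p x 0
  simp only [Finset.range_zero, Finset.sum_empty, sampleWeight_zero, h0, abs_zero,
    zero_add, pow_one] at h
  linarith [norm_nonneg x]

end SampleSeminorm

section OrbitSeminorm

variable {X : Type*} [TopologicalSpace X]

/-- The lattice norm whose isometries are studied: the maximum of the supremum norm and of the
sampling seminorms along all translates of the sequence `t` by the group `Γ`. -/
def orbitSeminorm (Γ : Subgroup (X ≃ₜ X)) (t : ℕ → X) : Seminorm ℝ C₀(X, ℝ) :=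
  normSeminorm ℝ C₀(X, ℝ) ⊔ ⨆ γ : Γ, sampleSeminorm (γ.1 ∘ t)

variable (Γ : Subgroup (X ≃ₜ X)) (t : ℕ → X)

theorem orbitSeminorm_apply (x : C₀(X, ℝ)) :
    orbitSeminorm Γ t x = max ‖x‖ (⨆ γ : Γ, sampleSeminorm (γ.1 ∘ t) x) := by
  have hbdd : BddAbove (Set.range fun γ : Γ => sampleSeminorm (γ.1 ∘ t)) := by
    refine Seminorm.bddAbove_range_iff.2 fun y => ⟨3 * ‖y‖, ?_⟩
    rintro _ ⟨γ, rfl⟩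
    exact sampleSeminorm_le_three_mul_norm _ y
  rw [orbitSeminorm, Seminorm.sup_apply, Seminorm.iSup_apply hbdd, coe_normSeminorm]

theorem norm_le_orbitSeminorm (x : C₀(X, ℝ)) : ‖x‖ ≤ orbitSeminorm Γ t x :=
  orbitSeminorm_apply Γ t x ▸ le_max_left _ _

theorem sampleSeminorm_le_orbitSeminorm {γ : X ≃ₜ X} (hγ : γ ∈ Γ) (x : C₀(X, ℝ)) :
    sampleSeminorm (γ ∘ t) x ≤ orbitSeminorm Γ t x := by
  rw [orbitSeminorm_apply]
  refine le_max_of_le_right (le_ciSup (f := fun γ : Γ => sampleSeminorm (γ.1 ∘ t) x) ?_ ⟨γ, hγ⟩)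
  exact ⟨3 * ‖x‖, Set.forall_mem_range.2 fun γ => sampleSeminorm_le_three_mul_norm _ x⟩

variable {Γ t}

theorem orbitSeminorm_le {x : C₀(X, ℝ)} {r : ℝ} (hx : ‖x‖ ≤ r)
    (h : ∀ γ ∈ Γ, sampleSeminorm (γ ∘ t) x ≤ r) : orbitSeminorm Γ t x ≤ r := by
  rw [orbitSeminorm_apply]
  exact max_le hx (ciSup_le fun γ => h γ.1 γ.2)

theorem exists_lt_sampleSeminorm {x : C₀(X, ℝ)} {r : ℝ} (hx : ‖x‖ ≤ r)
    (hr : r < orbitSeminorm Γ t x) : ∃ γ ∈ Γ, r < sampleSeminorm (γ ∘ t) x := by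
  contrapose! hr
  exact orbitSeminorm_le hx hr

theorem orbitSeminorm_le_three_mul_norm (x : C₀(X, ℝ)) : orbitSeminorm Γ t x ≤ 3 * ‖x‖ :=
  orbitSeminorm_le (by linarith [norm_nonneg x]) fun _ _ => sampleSeminorm_le_three_mul_norm _ x

theorem orbitSeminorm_mono {x y : C₀(X, ℝ)} (h : ∀ s, |x s| ≤ |y s|) :
    orbitSeminorm Γ t x ≤ orbitSeminorm Γ t y :=
  orbitSeminorm_le ((norm_le_norm_of_forall_abs_le h).trans (norm_le_orbitSeminorm Γ t y))
    fun _ hγ => (sampleSeminorm_mono _ h).trans (sampleSeminorm_le_orbitSeminorm Γ t hγ y)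

theorem orbitSeminorm_eq_norm {x : C₀(X, ℝ)} (h : ∀ γ ∈ Γ, x (γ (t 0)) = 0) :
    orbitSeminorm Γ t x = ‖x‖ :=
  le_antisymm
    (orbitSeminorm_le le_rfl fun γ hγ => sampleSeminorm_le_norm_of_apply_zero_eq_zero (h γ hγ))
    (norm_le_orbitSeminorm Γ t x)

theorem orbitSeminorm_eq_of_forall_apply_eq {γ : X ≃ₜ X} (hγ : γ ∈ Γ) {x y : C₀(X, ℝ)}
    (h : ∀ s, y s = x (γ s)) : orbitSeminorm Γ t y = orbitSeminorm Γ t x := by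
  have hsample : ∀ γ' : Γ, sampleSeminorm (γ'.1 ∘ t) y = sampleSeminorm ((⟨γ, hγ⟩ * γ').1 ∘ t) x :=
    fun γ' => tsum_congr fun n => congrArg (sampleWeight n * |·|) (h _)
  rw [orbitSeminorm_apply, orbitSeminorm_apply, norm_eq_norm_of_surjective γ.surjective h,
    iSup_congr hsample]
  exact congrArg (max ‖x‖) <| (Equiv.mulLeft (⟨γ, hγ⟩ : Γ)).iSup_comp
    (g := fun γ' : Γ => sampleSeminorm (γ'.1 ∘ t) x)

end OrbitSeminorm

section StepFunctions

theorem exists_c0_step_function {X : Type*} [MetricSpace X] [LocallyCompactSpace X] (p : ℕ → X)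
    {c : ℕ → ℝ} (hc : Antitone c) (hc0 : ∀ n, 0 ≤ c n) {ε : ℝ} (hε : 0 < ε) (k : ℕ) :
    ∃ x : C₀(X, ℝ), (∀ s, 0 ≤ x s) ∧ (∀ n < k, c n ≤ x (p n)) ∧
      ∀ s j, (∀ i < k, i < j → ε ≤ dist (p i) s) → x s ≤ c j := by
  induction k with
  | zero => exact ⟨0, fun _ => le_rfl, by simp, fun _ j _ => hc0 j⟩
  | succ k ih =>
    obtain ⟨x, hx0, hxp, hxs⟩ := ih
    obtain ⟨e, heI, hep, he0⟩ := exists_c0_bump_at isOpen_ball (mem_ball_self (x := p k) hε)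
    refine ⟨c0sup x (c k • e), fun s => le_max_of_le_left (hx0 s), fun n hn => ?_,
      fun s j hs => max_le (hxs s j fun i hi => hs i (hi.trans k.lt_succ_self)) ?_⟩
    · rcases Nat.lt_succ_iff_lt_or_eq.1 hn with hn | rfl
      · exact le_max_of_le_left (hxp n hn)
      · exact le_max_of_le_right (by simp [hep])
    · rw [ZeroAtInftyContinuousMap.smul_apply, smul_eq_mul]
      rcases lt_or_ge k j with hkj | hjk
      · rw [he0 s, mul_zero]
        · exact hc0 j
        · rw [mem_ball']
          exact (hs k k.lt_succ_self hkj).not_gt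
      · exact (mul_le_of_le_one_right (hc0 k) (heI s).2).trans (hc hjk)

end StepFunctions

section OrbitApproximation

variable {X : Type*} [MetricSpace X] {Γ : Subgroup (X ≃ₜ X)}

/- Two points at distance `d` cannot be moved close to a common point `p` by the same `γ`: the
equicontinuous inverse `γ⁻¹` would bring them within `d` of each other. -/
theorem eventually_forall_mem_dist_lt_imp_le_dist (hΓ : Equicontinuous fun γ : Γ => ⇑γ.1)
    {u v : X} (huv : u ≠ v) (p : X) :
    ∀ᶠ δ in 𝓝[>] (0 : ℝ), ∀ γ ∈ Γ, dist p (γ u) < δ → δ ≤ dist p (γ v) := by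
  obtain ⟨δ₀, hδ₀, hsmall⟩ :=
    Metric.equicontinuousAt_iff.1 (hΓ p) (dist u v / 2) (half_pos (dist_pos.2 huv))
  have hback : ∀ γ ∈ Γ, ∀ s, dist p (γ s) < δ₀ → dist (γ⁻¹ p) s < dist u v / 2 :=
      fun γ hγ s hs => by
    simpa using hsmall (γ s) (dist_comm p _ ▸ hs) ⟨γ⁻¹, Γ.inv_mem hγ⟩
  filter_upwards [Ioc_mem_nhdsGT hδ₀] with δ hδ γ hγ hu
  by_contra! hv
  have hu' := hback γ hγ u (hu.trans_le hδ.2)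
  have hv' := hback γ hγ v (hv.trans_le hδ.2)
  linarith [dist_triangle_left u v (γ⁻¹ p)]

theorem exists_separation_radius (hΓ : Equicontinuous fun γ : Γ => ⇑γ.1) {t : ℕ → X}
    (ht : Function.Injective t) (p : ℕ → X) (k : ℕ) {ε : ℝ} (hε : 0 < ε) :
    ∃ δ > 0, δ ≤ ε ∧ ∀ i < k, ∀ j < k, i ≠ j → ∀ γ ∈ Γ,
      dist (p i) (γ (t i)) < δ → δ ≤ dist (p i) (γ (t j)) := by
  have hsep : ∀ᶠ δ in 𝓝[>] (0 : ℝ), ∀ i < k, ∀ j < k, i ≠ j → ∀ γ ∈ Γ,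
      dist (p i) (γ (t i)) < δ → δ ≤ dist (p i) (γ (t j)) :=
    (eventually_all_finite (Set.finite_lt_nat k)).2 fun i _ =>
      (eventually_all_finite (Set.finite_lt_nat k)).2 fun j _ =>
        eventually_imp_distrib_left.2 fun hij =>
          eventually_forall_mem_dist_lt_imp_le_dist hΓ (ht.ne hij) (p i)
  obtain ⟨δ, hδ, hδε⟩ := (hsep.and (Ioc_mem_nhdsGT hε)).exists
  exact ⟨δ, hδε.1, hδε.2, hδ⟩

theorem sampleWeight_mul_pow_le_of_le {j k : ℕ} (hjk : j ≤ k) :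
    sampleWeight k * (1 / 4) ^ k ≤ sampleWeight j * (1 / 4) ^ j :=
  mul_le_mul (antitone_sampleWeight hjk)
    (pow_le_pow_of_le_one (by norm_num) (by norm_num) hjk) (by positivity) (sampleWeight_pos j).le

theorem sampleWeight_mul_pow_add_sum_range_le {j k : ℕ} (hjk : j ≤ k) :
    ∑ n ∈ Finset.range j, sampleWeight n * (1 / 4) ^ n + sampleWeight j * (1 / 4) ^ j ≤
      ∑ n ∈ Finset.range (k + 1), sampleWeight n * (1 / 4) ^ n := by
  rw [← Finset.sum_range_succ]
  refine Finset.sum_le_sum_of_subset_of_nonneg (Finset.range_mono (by lia)) fun n _ _ => ?_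
  exact mul_nonneg (sampleWeight_pos n).le (by positivity)

theorem exists_mem_lt_sampleSeminorm {t p : ℕ → X}
    (hp : ∀ x : C₀(X, ℝ), sampleSeminorm p x ≤ orbitSeminorm Γ t x) {x : C₀(X, ℝ)}
    (hx : ‖x‖ ≤ 1) {k : ℕ} (hxp : ∀ n < k + 1, (1 / 4) ^ n ≤ x (p n)) :
    ∃ γ ∈ Γ, ∑ n ∈ Finset.range (k + 1), sampleWeight n * (1 / 4) ^ n -
      sampleWeight k * (1 / 4) ^ k / 2 < sampleSeminorm (γ ∘ t) x := by
  have hpos : 0 < sampleWeight k * (1 / 4) ^ k := mul_pos (sampleWeight_pos k) (by positivity)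
  have hlast := sampleWeight_mul_pow_le_of_le k.zero_le
  have hfirst := sampleWeight_mul_pow_add_sum_range_le k.zero_le
  rw [Finset.sum_range_zero, sampleWeight_zero, pow_zero] at hfirst
  rw [sampleWeight_zero, pow_zero] at hlast
  refine exists_lt_sampleSeminorm (by linarith) ?_
  calc _ < ∑ n ∈ Finset.range (k + 1), sampleWeight n * (1 / 4) ^ n := by linarith
    _ ≤ ∑ n ∈ Finset.range (k + 1), sampleWeight n * |x (p n)| :=
      Finset.sum_le_sum fun n hn => mul_le_mul_of_nonneg_left
        ((hxp n (Finset.mem_range.1 hn)).trans (le_abs_self _)) (sampleWeight_pos n).le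
    _ ≤ orbitSeminorm Γ t x := (sum_range_le_sampleSeminorm p x _).trans (hp x)

theorem sampleSeminorm_le_of_apply_le_pow {q : ℕ → X} {x : C₀(X, ℝ)} (hx0 : ∀ s, 0 ≤ x s)
    (hx : ‖x‖ ≤ 1) {j k : ℕ} (hjk : j ≤ k) (hlt : ∀ n < j, x (q n) ≤ (1 / 4) ^ n)
    (hj : x (q j) ≤ (1 / 4) ^ (j + 1)) :
    sampleSeminorm q x ≤ ∑ n ∈ Finset.range (k + 1), sampleWeight n * (1 / 4) ^ n -
      sampleWeight k * (1 / 4) ^ k / 2 := by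
  calc sampleSeminorm q x
      ≤ ∑ n ∈ Finset.range j, sampleWeight n * |x (q n)| +
          sampleWeight j * (|x (q j)| + (1 / 4) ^ (j + 1) * ‖x‖) :=
        sampleSeminorm_le_sum_range_add q x j
    _ ≤ ∑ n ∈ Finset.range j, sampleWeight n * (1 / 4) ^ n +
          sampleWeight j * ((1 / 4) ^ (j + 1) + (1 / 4) ^ (j + 1) * 1) := by
        simp only [abs_of_nonneg (hx0 _)]
        have := sampleWeight_pos j
        gcongr with n hn
        · exact (sampleWeight_pos n).le
        · exact hlt n (Finset.mem_range.1 hn)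
    _ = ∑ n ∈ Finset.range j, sampleWeight n * (1 / 4) ^ n +
          sampleWeight j * (1 / 4) ^ j - sampleWeight j * (1 / 4) ^ j / 2 := by ring
    _ ≤ _ := by
        linarith [sampleWeight_mul_pow_add_sum_range_le hjk, sampleWeight_mul_pow_le_of_le hjk]

/- A function with steps of height `(1 / 4) ^ n` at `p n` is nearly normed by some `γ`. If `γ`
first misses `p j`, it loses three quarters of the `j`-th term, more than all later terms can
recover. -/
theorem exists_mem_forall_dist_lt [LocallyCompactSpace X]
    (hΓ : Equicontinuous fun γ : Γ => ⇑γ.1) {t p : ℕ → X} (ht : Function.Injective t)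
    (hp : ∀ x : C₀(X, ℝ), sampleSeminorm p x ≤ orbitSeminorm Γ t x) (k : ℕ) {ε : ℝ}
    (hε : 0 < ε) : ∃ γ ∈ Γ, ∀ n ≤ k, dist (p n) (γ (t n)) < ε := by
  obtain ⟨δ, hδ, hδε, hsep⟩ := exists_separation_radius hΓ ht p (k + 1) hε
  obtain ⟨x, hx0, hxp, hxs⟩ := exists_c0_step_function p (c := fun n => (1 / 4 : ℝ) ^ n)
    (pow_right_anti₀ (by norm_num) (by norm_num)) (fun n => by positivity) hδ (k + 1)
  have hx : ‖x‖ ≤ 1 := norm_le_of_forall_abs_apply_le zero_le_one fun s => by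
    simpa [abs_of_nonneg (hx0 s)] using hxs s 0 (by simp)
  obtain ⟨γ, hγ, hlt⟩ := exists_mem_lt_sampleSeminorm hp hx hxp
  suffices hclose : ∀ j ≤ k, dist (p j) (γ (t j)) < δ from
    ⟨γ, hγ, fun n hn => (hclose n hn).trans_le hδε⟩
  intro j
  induction j using Nat.strong_induction_on with | _ j ih =>
  intro hjk
  have hmiss : ∀ i < j, ∀ n ≤ k, i ≠ n → δ ≤ dist (p i) (γ (t n)) := fun i hi n hn hin =>
    hsep i (by lia) n (by lia) hin γ hγ (ih i hi (by lia))
  by_contra! hj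
  refine hlt.not_ge (sampleSeminorm_le_of_apply_le_pow hx0 hx hjk (fun n hn => ?_) ?_)
  · exact hxs _ n fun i _ hin => hmiss i (hin.trans hn) n (by lia) hin.ne
  · refine hxs _ (j + 1) fun i _ hij => ?_
    rcases Nat.lt_succ_iff_lt_or_eq.1 hij with hij | rfl
    · exact hmiss i hij j hjk hij.ne
    · exact hj

theorem exists_seq_tendsto_of_sampleSeminorm_le [LocallyCompactSpace X]
    (hΓ : Equicontinuous fun γ : Γ => ⇑γ.1) {t : ℕ → X} (ht : Function.Injective t)
    (htd : DenseRange t) {ψ : X → X} (hψ : Continuous ψ)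
    (hp : ∀ x : C₀(X, ℝ), sampleSeminorm (ψ ∘ t) x ≤ orbitSeminorm Γ t x) :
    ∃ γ : ℕ → Γ, ∀ s, Tendsto (fun k => (γ k).1 s) atTop (𝓝 (ψ s)) := by
  choose γ hγ hdist using fun k : ℕ =>
    exists_mem_forall_dist_lt hΓ ht hp k (Nat.one_div_pos_of_nat (α := ℝ) (n := k))
  refine ⟨fun k => ⟨γ k, hγ k⟩, fun s => ?_⟩
  refine htd.induction_on s
    ((hΓ.comp fun k => ⟨γ k, hγ k⟩).isClosed_setOfPred_tendsto hψ) fun n => ?_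
  refine tendsto_iff_dist_tendsto_zero.2 (squeeze_zero' (.of_forall fun _ => dist_nonneg) ?_
    tendsto_one_div_add_atTop_nhds_zero_nat)
  filter_upwards [eventually_ge_atTop n] with k hk
  exact dist_comm (ψ (t n)) _ ▸ (hdist k n hk).le

end OrbitApproximation

section IsometriesOfOrbitSeminorm

variable {X : Type*}

theorem weight_le_one_of_orbitSeminorm_le [TopologicalSpace X] [T2Space X] [LocallyCompactSpace X]
    {Γ : Subgroup (X ≃ₜ X)} {t : ℕ → X} (hnd : IsNowhereDense {z | ∃ γ ∈ Γ, γ (t 0) = z})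
    {T : C₀(X, ℝ) → C₀(X, ℝ)} {b : X → ℝ} {ψ : X ≃ₜ X} (hT : ∀ f s, T f s = b s * f (ψ s))
    (hN : ∀ f, orbitSeminorm Γ t (T f) ≤ orbitSeminorm Γ t f) (s : X) : b s ≤ 1 := by
  set V := (closure {z | ∃ γ ∈ Γ, γ (t 0) = z})ᶜ
  have hVd : Dense (ψ ⁻¹' V) :=
    (interior_eq_empty_iff_dense_compl.1 hnd).preimage ψ.isOpenMap
  have hbV : ∀ u ∈ ψ ⁻¹' V, b u ≤ 1 := fun u hu => by
    obtain ⟨e, heI, heu, he0⟩ := exists_c0_bump_at isClosed_closure.isOpen_compl hu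
    have hNe : orbitSeminorm Γ t e = ‖e‖ := orbitSeminorm_eq_norm fun γ hγ =>
      he0 _ fun h => h (subset_closure ⟨γ, hγ, rfl⟩)
    calc b u = T e u := by rw [hT, heu, mul_one]
      _ ≤ ‖T e‖ := (le_abs_self _).trans (abs_apply_le_norm _ u)
      _ ≤ orbitSeminorm Γ t (T e) := norm_le_orbitSeminorm Γ t _
      _ ≤ ‖e‖ := hNe ▸ hN e
      _ ≤ 1 := norm_le_of_forall_abs_apply_le zero_le_one fun v => by
        rw [abs_of_nonneg (heI v).1]; exact (heI v).2
  obtain ⟨e, heI, hes, -⟩ := exists_c0_bump_at isOpen_univ (Set.mem_univ (ψ s))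
  have hclosed : IsClosed {u | T e u ≤ e (ψ u)} :=
    isClosed_le (map_continuous (T e)) ((map_continuous e).comp ψ.continuous)
  have hsub : ψ ⁻¹' V ⊆ {u | T e u ≤ e (ψ u)} := fun u hu =>
    (hT e u).trans_le (mul_le_of_le_one_left (heI _).1 (hbV u hu))
  have hs : T e s ≤ e (ψ s) := (hclosed.closure_subset_iff.2 hsub) (hVd s)
  rwa [hT, hes, mul_one] at hs

theorem exists_eq_comp_of_orbitSeminorm_isometry [TopologicalSpace X] [T2Space X]
    [LocallyCompactSpace X] {Γ : Subgroup (X ≃ₜ X)} {t : ℕ → X}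
    (hnd : IsNowhereDense {z | ∃ γ ∈ Γ, γ (t 0) = z}) {T : C₀(X, ℝ) ≃L[ℝ] C₀(X, ℝ)}
    (hT : ∀ f g : C₀(X, ℝ), T (c0sup f g) = c0sup (T f) (T g))
    (hN : ∀ x, orbitSeminorm Γ t (T x) = orbitSeminorm Γ t x) :
    ∃ ψ : X ≃ₜ X, ∀ x s, T x s = x (ψ s) := by
  obtain ⟨b, b', ψ, hb, hbb', hrep, hrep'⟩ := exists_homeomorph_apply_eq_mul_of_map_c0sup T hT
  have hb1 : ∀ s, b s ≤ 1 := weight_le_one_of_orbitSeminorm_le hnd hrep fun x => (hN x).le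
  have hb1' : ∀ s, b' s ≤ 1 := weight_le_one_of_orbitSeminorm_le hnd hrep' fun x => by
    simpa using (hN (T.symm x)).ge
  refine ⟨ψ, fun x s => ?_⟩
  have hone : b s = 1 := le_antisymm (hb1 s) <|
    (hbb' s).ge.trans (mul_le_of_le_one_right (hb s).le (hb1' (ψ s)))
  rw [hrep, hone, one_mul]

theorem exists_seq_tendsto_of_orbitSeminorm_isometry [MetricSpace X] [LocallyCompactSpace X]
    {Γ : Subgroup (X ≃ₜ X)} (hΓ : Equicontinuous fun γ : Γ => ⇑γ.1) {t : ℕ → X}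
    (ht : Function.Injective t) (htd : DenseRange t)
    (hnd : IsNowhereDense {z | ∃ γ ∈ Γ, γ (t 0) = z}) {T : C₀(X, ℝ) ≃L[ℝ] C₀(X, ℝ)}
    (hT : ∀ f g : C₀(X, ℝ), T (c0sup f g) = c0sup (T f) (T g))
    (hN : ∀ x, orbitSeminorm Γ t (T x) = orbitSeminorm Γ t x) :
    ∃ ψ : X ≃ₜ X, (∀ x s, T x s = x (ψ s)) ∧
      ∃ γ : ℕ → Γ, ∀ s, Tendsto (fun k => (γ k).1 s) atTop (𝓝 (ψ s)) := by
  obtain ⟨ψ, hψ⟩ := exists_eq_comp_of_orbitSeminorm_isometry hnd hT hN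
  refine ⟨ψ, hψ, exists_seq_tendsto_of_sampleSeminorm_le hΓ ht htd ψ.continuous fun x => ?_⟩
  calc sampleSeminorm (ψ ∘ t) x = sampleSeminorm ((1 : X ≃ₜ X) ∘ t) (T x) :=
        tsum_congr fun n => congrArg (sampleWeight n * |·|) (hψ x (t n)).symm
    _ ≤ orbitSeminorm Γ t (T x) := sampleSeminorm_le_orbitSeminorm Γ t Γ.one_mem _
    _ = orbitSeminorm Γ t x := hN x

end IsometriesOfOrbitSeminorm

section UniformConvergence

variable {X : Type*}

theorem tendstoUniformlyOn_of_equicontinuous {ι Y : Type*} [TopologicalSpace X] [UniformSpace Y]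
    {F : ι → X → Y} {f : X → Y} {l : Filter ι} (hF : Equicontinuous F)
    (hlim : ∀ s, Tendsto (fun i => F i s) l (𝓝 (f s))) {K : Set X} (hK : IsCompact K) :
    TendstoUniformlyOn F f l K := by
  refine UniformOnFun.tendsto_iff_tendstoUniformlyOn.1
    ((EquicontinuousOn.tendsto_uniformOnFun_iff_pi' ?_ ?_ l f).2 ?_) K (Set.mem_singleton K)
  · rintro _ rfl
    exact hK
  · exact fun _ _ => hF.equicontinuousOn _
  · rw [Set.sUnion_singleton]
    exact tendsto_pi_nhds.2 fun s => hlim s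

theorem tendsto_symm_of_equicontinuous [UniformSpace X] {ι : Type*} {l : Filter ι}
    {γ : ι → X ≃ₜ X} (hγ : Equicontinuous fun i => ⇑(γ i).symm) {ψ : X ≃ₜ X}
    (hlim : ∀ s, Tendsto (fun i => γ i s) l (𝓝 (ψ s))) (s : X) :
    Tendsto (fun i => (γ i).symm s) l (𝓝 (ψ.symm s)) := by
  refine Uniform.tendsto_nhds_right.2 fun V hV => mem_map.2 ?_
  have hnear : Tendsto (fun i => γ i (ψ.symm s)) l (𝓝 s) := by simpa using hlim (ψ.symm s)
  filter_upwards [hnear.eventually (hγ s _ (symm_le_uniformity hV))] with i hi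
  simpa using hi i

/- Where `|x ∘ ψ|` is not small, `s` lies in a compact set; where `|x ∘ γ i|` is not small, `γ i s`
lies in a compact set, on which the inverses converge uniformly. -/
theorem tendsto_comp_of_equicontinuous [UniformSpace X] {ι : Type*} {l : Filter ι}
    {γ : ι → X ≃ₜ X} (hγ : Equicontinuous fun i => ⇑(γ i))
    (hγ' : Equicontinuous fun i => ⇑(γ i).symm) {ψ : X ≃ₜ X}
    (hlim : ∀ s, Tendsto (fun i => γ i s) l (𝓝 (ψ s))) (x : C₀(X, ℝ)) :
    Tendsto (fun i => x.comp (γ i).toCocompactMap) l (𝓝 (x.comp ψ.toCocompactMap)) := by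
  refine ZeroAtInftyContinuousMap.tendsto_iff_tendstoUniformly.2 <|
    Metric.tendstoUniformly_iff.2 fun ε hε => ?_
  have hK := isCompact_setOf_le_abs x (half_pos hε)
  have hdirect : TendstoUniformlyOn (fun i s => x (γ i s)) (fun s => x (ψ s)) l
      (ψ ⁻¹' {u | ε / 2 ≤ |x u|}) :=
    (ZeroAtInftyContinuousMap.uniformContinuous x).comp_tendstoUniformlyOn
      (tendstoUniformlyOn_of_equicontinuous hγ hlim (ψ.isCompact_preimage.2 hK))
  have hinverse : TendstoUniformlyOn (fun i u => x (ψ ((γ i).symm u))) (fun u => x (ψ (ψ.symm u)))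
      l {u | ε / 2 ≤ |x u|} :=
    (ZeroAtInftyContinuousMap.uniformContinuous
      (x.comp ψ.toCocompactMap)).comp_tendstoUniformlyOn
      (tendstoUniformlyOn_of_equicontinuous hγ' (tendsto_symm_of_equicontinuous hγ' hlim) hK)
  filter_upwards [Metric.tendstoUniformlyOn_iff.1 hdirect ε hε,
    Metric.tendstoUniformlyOn_iff.1 hinverse ε hε] with i hi hi' s
  by_cases hs : ε / 2 ≤ |x (ψ s)|
  · exact hi s hs
  by_cases hs' : ε / 2 ≤ |x (γ i s)|
  · simpa [dist_comm] using hi' (γ i s) hs'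
  calc dist (x (ψ s)) (x (γ i s)) ≤ |x (ψ s)| + |x (γ i s)| := abs_sub _ _
    _ < ε := by linarith

theorem equicontinuous_of_forall_isCompact {ι Y : Type*} [PseudoMetricSpace X]
    [WeaklyLocallyCompactSpace X] [PseudoMetricSpace Y] {F : ι → X → Y}
    (h : ∀ K : Set X, IsCompact K → ∀ ε > 0, ∃ δ > 0, ∀ s ∈ K, ∀ t ∈ K, dist s t < δ →
      ∀ i, dist (F i s) (F i t) < ε) : Equicontinuous F := fun s => by
  obtain ⟨K, hK, hKs⟩ := exists_compact_mem_nhds s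
  refine Metric.equicontinuousAt_iff_right.2 fun ε hε => ?_
  obtain ⟨δ, hδ, hF⟩ := h K hK ε hε
  filter_upwards [hKs, ball_mem_nhds s hδ] with t htK hts
  exact hF s (mem_of_mem_nhds hKs) t htK (mem_ball'.1 hts)

theorem continuous_iInf_of_equicontinuous {ι : Type*} [Nonempty ι] [TopologicalSpace X]
    {F : ι → X → ℝ} (hF : Equicontinuous F) (hbdd : ∀ s, BddBelow (Set.range fun i => F i s)) :
    Continuous fun s => ⨅ i, F i s := by
  refine continuous_iff_continuousAt.2 fun s => Metric.tendsto_nhds.2 fun ε hε => ?_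
  have hle : ∀ u v, (∀ i, dist (F i u) (F i v) < ε / 2) → (⨅ i, F i u) - ε / 2 ≤ ⨅ i, F i v :=
    fun u v h => le_ciInf fun i => by
      linarith [ciInf_le (hbdd u) i, (abs_lt.1 (h i)).2]
  filter_upwards [Metric.equicontinuousAt_iff_right.1 (hF s) (ε / 2) (half_pos hε)] with t ht
  have h1 := hle s t ht
  have h2 := hle t s fun i => dist_comm (F i s) _ ▸ ht i
  exact abs_sub_lt_iff.2 ⟨by linarith, by linarith⟩

end UniformConvergence

section DenseSequences

variable {X : Type*} [TopologicalSpace X] [T1Space X]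

theorem infinite_of_isNowhereDense {A : Set X} (hA : IsNowhereDense A) (hne : A.Nonempty) :
    Infinite X := by
  refine not_finite_iff_infinite.1 fun _ => hne.ne_empty ?_
  rw [← Set.subset_empty_iff, ← hA, (isOpen_discrete (closure A)).interior_eq]
  exact subset_closure

theorem exists_injective_denseRange [Infinite X] [TopologicalSpace.SeparableSpace X] (x₀ : X) :
    ∃ t : ℕ → X, Function.Injective t ∧ DenseRange t ∧ t 0 = x₀ := by
  obtain ⟨S, hSc, hSd⟩ := TopologicalSpace.exists_countable_dense X
  have : Countable ↥(insert x₀ S) := (hSc.insert x₀).to_subtype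
  have hdense : Dense (insert x₀ S) := hSd.mono (Set.subset_insert x₀ S)
  have : Infinite ↥(insert x₀ S) := Set.infinite_coe_iff.2 fun hfin =>
    Set.infinite_univ (hdense.closure_eq ▸ hfin.isClosed.closure_eq.symm ▸ hfin)
  obtain ⟨_⟩ := nonempty_denumerable ↥(insert x₀ S)
  let e : ℕ ≃ ↥(insert x₀ S) := (Denumerable.eqv _).symm
  let e' := (Equiv.swap 0 (e.symm ⟨x₀, Set.mem_insert x₀ S⟩)).trans e
  refine ⟨fun n => e' n, Subtype.val_injective.comp e'.injective, ?_, by simp [e']⟩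
  exact hdense.denseRange_val.comp e'.surjective.denseRange continuous_subtype_val

end DenseSequences

section EquicontinuousGroups

variable {X : Type*} [MetricSpace X] [LocallyCompactSpace X] {Γ : Subgroup (X ≃ₜ X)}

theorem orbitSeminorm_isometry_iff_exists_mem (hΓ : Equicontinuous fun γ : Γ => ⇑γ.1)
    (hcl : ∀ (γ : ℕ → Γ) (ψ : X ≃ₜ X),
      (∀ s, Tendsto (fun k => (γ k).1 s) atTop (𝓝 (ψ s))) → ψ ∈ Γ)
    {t : ℕ → X} (ht : Function.Injective t) (htd : DenseRange t)
    (hnd : IsNowhereDense {z | ∃ γ ∈ Γ, γ (t 0) = z}) {T : C₀(X, ℝ) ≃L[ℝ] C₀(X, ℝ)}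
    (hT : ∀ f g : C₀(X, ℝ), T (c0sup f g) = c0sup (T f) (T g)) :
    (∀ x, orbitSeminorm Γ t (T x) = orbitSeminorm Γ t x) ↔ ∃ γ ∈ Γ, ∀ x s, T x s = x (γ s) := by
  constructor
  · intro hN
    obtain ⟨ψ, hψ, γ, hγ⟩ := exists_seq_tendsto_of_orbitSeminorm_isometry hΓ ht htd hnd hT hN
    exact ⟨ψ, hcl γ ψ hγ, hψ⟩
  · rintro ⟨γ, hγ, hTγ⟩ x
    exact orbitSeminorm_eq_of_forall_apply_eq hγ (hTγ x)

theorem exists_seminorm_isometry_iff_exists_mem [TopologicalSpace.SeparableSpace X]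
    (hΓ : Equicontinuous fun γ : Γ => ⇑γ.1)
    (hcl : ∀ (γ : ℕ → Γ) (ψ : X ≃ₜ X),
      (∀ s, Tendsto (fun k => (γ k).1 s) atTop (𝓝 (ψ s))) → ψ ∈ Γ)
    (hnd : Nonempty X → ∃ t₀, IsNowhereDense {z | ∃ γ ∈ Γ, γ t₀ = z}) :
    ∃ N : Seminorm ℝ C₀(X, ℝ), (∀ x y : C₀(X, ℝ), (∀ s, |x s| ≤ |y s|) → N x ≤ N y) ∧
      (∀ x, ‖x‖ ≤ N x ∧ N x ≤ 3 * ‖x‖) ∧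
      ∀ T : C₀(X, ℝ) ≃L[ℝ] C₀(X, ℝ),
        (∀ f g : C₀(X, ℝ), T (c0sup f g) = c0sup (T f) (T g)) →
        ((∀ x, N (T x) = N x) ↔ ∃ γ ∈ Γ, ∀ x s, T x s = x (γ s)) := by
  rcases isEmpty_or_nonempty X with hX | hX
  · refine ⟨normSeminorm ℝ _, fun _ _ => norm_le_norm_of_forall_abs_le,
      fun x => ⟨le_rfl, le_mul_of_one_le_left (norm_nonneg x) (by norm_num)⟩, fun T _ => ?_⟩
    exact iff_of_true (fun x => congrArg _ (ZeroAtInftyContinuousMap.eq_of_empty (T x) x))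
      ⟨1, Γ.one_mem, fun _ s => isEmptyElim s⟩
  obtain ⟨t₀, ht₀⟩ := hnd hX
  have := infinite_of_isNowhereDense ht₀ ⟨t₀, 1, Γ.one_mem, rfl⟩
  obtain ⟨t, ht, htd, rfl⟩ := exists_injective_denseRange t₀
  exact ⟨orbitSeminorm Γ t, fun _ _ => orbitSeminorm_mono,
    fun x => ⟨norm_le_orbitSeminorm Γ t x, orbitSeminorm_le_three_mul_norm x⟩,
    fun _ => orbitSeminorm_isometry_iff_exists_mem hΓ hcl ht htd ht₀⟩

end EquicontinuousGroups

section CompositionAndMultiplication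

open BoundedContinuousFunction

variable {X : Type*} [TopologicalSpace X]

/-- The composition operator `f ↦ f ∘ ψ`. -/
def compEquiv (ψ : X ≃ₜ X) : C₀(X, ℝ) ≃L[ℝ] C₀(X, ℝ) :=
  LinearIsometryEquiv.toContinuousLinearEquiv
    { toFun := fun f => f.comp ψ.toCocompactMap
      invFun := fun f => f.comp ψ.symm.toCocompactMap
      left_inv := fun f => by ext t; exact congrArg f (ψ.apply_symm_apply t)
      right_inv := fun f => by ext t; exact congrArg f (ψ.symm_apply_apply t)
      map_add' := fun _ _ => rfl
      map_smul' := fun _ _ => rfl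
      norm_map' := fun _ => norm_eq_norm_of_surjective ψ.surjective fun _ => rfl }

/-- The multiplication operator `f ↦ p · f` by a bounded continuous function `p`. -/
def mulOperator (p : X →ᵇ ℝ) : C₀(X, ℝ) →L[ℝ] C₀(X, ℝ) :=
  LinearMap.mkContinuous
    { toFun := fun f =>
        { toFun := fun t => p t * f t
          continuous_toFun := (map_continuous p).mul (map_continuous f)
          zero_at_infty' := isBoundedUnder_le_mul_tendsto_zero
            (isBoundedUnder_of ⟨‖p‖, p.norm_coe_le_norm⟩) (zero_at_infty f) }
      map_add' := fun f g => by ext t; exact mul_add (p t) (f t) (g t)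
      map_smul' := fun c f => by ext t; exact mul_left_comm (p t) c (f t) } ‖p‖
    fun f => norm_le_of_forall_abs_apply_le (by positivity) fun t => by
      change |p t * f t| ≤ _
      rw [abs_mul]
      exact mul_le_mul (p.norm_coe_le_norm t) (abs_apply_le_norm f t) (abs_nonneg _) (norm_nonneg p)

theorem mulOperator_apply (p : X →ᵇ ℝ) (f : C₀(X, ℝ)) (t : X) :
    mulOperator p f t = p t * f t := rfl

theorem mulOperator_mulOperator_of_mul_eq_one {p q : X →ᵇ ℝ} (h : p * q = 1) (f : C₀(X, ℝ)) :
    mulOperator p (mulOperator q f) = f := by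
  ext t
  rw [mulOperator_apply, mulOperator_apply, ← mul_assoc, ← mul_apply, h, coe_one, Pi.one_apply,
    one_mul]

/-- The multiplication operator by a bounded continuous function with bounded inverse. -/
def mulEquiv (u : (X →ᵇ ℝ)ˣ) : C₀(X, ℝ) ≃L[ℝ] C₀(X, ℝ) :=
  .equivOfInverse (mulOperator u) (mulOperator ↑u⁻¹)
    (mulOperator_mulOperator_of_mul_eq_one u.inv_mul)
    (mulOperator_mulOperator_of_mul_eq_one u.mul_inv)

theorem mulEquiv_apply (u : (X →ᵇ ℝ)ˣ) (f : C₀(X, ℝ)) (t : X) :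
    mulEquiv u f t = u.1 t * f t := rfl

theorem mul_mulEquiv_symm_apply (u : (X →ᵇ ℝ)ˣ) (f : C₀(X, ℝ)) (t : X) :
    u.1 t * (mulEquiv u).symm f t = f t := by
  rw [← mulEquiv_apply, ContinuousLinearEquiv.apply_symm_apply]

theorem units_boundedContinuousFunction_apply_ne_zero (u : (X →ᵇ ℝ)ˣ) (t : X) : u.1 t ≠ 0 :=
  left_ne_zero_of_mul_eq_one (DFunLike.congr_fun u.mul_inv t)

theorem exists_units_boundedContinuousFunction {p : X → ℝ} (hp : Continuous p) {c C : ℝ}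
    (hc : 0 < c) (hpc : ∀ t, c ≤ p t) (hpC : ∀ t, p t ≤ C) : ∃ u : (X →ᵇ ℝ)ˣ, ∀ t, u.1 t = p t := by
  have hpos : ∀ t, 0 < p t := fun t => hc.trans_le (hpc t)
  refine ⟨⟨.ofNormedAddCommGroup p hp C fun t => ?_, .ofNormedAddCommGroup (fun t => (p t)⁻¹)
    (hp.inv₀ fun t => (hpos t).ne') c⁻¹ fun t => ?_, ?_, ?_⟩, fun t => rfl⟩
  · rw [Real.norm_of_nonneg (hpos t).le]
    exact hpC t
  · rw [Real.norm_of_nonneg (inv_pos.2 (hpos t)).le]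
    exact inv_anti₀ hc (hpc t)
  · ext t
    exact mul_inv_cancel₀ (hpos t).ne'
  · ext t
    exact inv_mul_cancel₀ (hpos t).ne'

theorem map_c0sup_of_forall_apply_eq_mul {T : C₀(X, ℝ) → C₀(X, ℝ)} {b : X → ℝ} {ψ : X → X}
    (hb : ∀ t, 0 ≤ b t) (hT : ∀ f t, T f t = b t * f (ψ t)) (f g : C₀(X, ℝ)) :
    T (c0sup f g) = c0sup (T f) (T g) := by
  ext t
  rw [c0sup_apply, hT, hT, hT, c0sup_apply, mul_max_of_nonneg _ _ (hb t)]

end CompositionAndMultiplication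

/-- The group `G` consists of the weighted composition operators `f ↦ a g · (f ∘ φ g)` with positive
weights. The values of `a` and `φ` outside `G` are irrelevant. -/
structure IsWeightedCompositionGroup {X : Type*} [TopologicalSpace X]
    (G : Subgroup (C₀(X, ℝ) ≃L[ℝ] C₀(X, ℝ))) (a : (C₀(X, ℝ) ≃L[ℝ] C₀(X, ℝ)) → X → ℝ)
    (φ : (C₀(X, ℝ) ≃L[ℝ] C₀(X, ℝ)) → X ≃ₜ X) : Prop where
  apply_eq : ∀ g ∈ G, ∀ f t, g f t = a g t * f (φ g t)
  weight_pos : ∀ g ∈ G, ∀ t, 0 < a g t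

/-- The pointwise infimum of the weights of a group; the multiplier `m_G` is its reciprocal. -/
def infWeight {X : Type*} [TopologicalSpace X] (G : Subgroup (C₀(X, ℝ) ≃L[ℝ] C₀(X, ℝ)))
    (a : (C₀(X, ℝ) ≃L[ℝ] C₀(X, ℝ)) → X → ℝ) (t : X) : ℝ :=
  ⨅ g : G, a g.1 t

namespace IsWeightedCompositionGroup

section Symbols

variable {X : Type*} [TopologicalSpace X] [T2Space X] [LocallyCompactSpace X]
  {G : Subgroup (C₀(X, ℝ) ≃L[ℝ] C₀(X, ℝ))} {a : (C₀(X, ℝ) ≃L[ℝ] C₀(X, ℝ)) → X → ℝ}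
  {φ : (C₀(X, ℝ) ≃L[ℝ] C₀(X, ℝ)) → X ≃ₜ X} (hG : IsWeightedCompositionGroup G a φ)
include hG

theorem symbol_eq_and_weight_eq {g : C₀(X, ℝ) ≃L[ℝ] C₀(X, ℝ)} (hg : g ∈ G) {c : ℝ} {s t : X}
    (h : ∀ f : C₀(X, ℝ), g f t = c * f s) : φ g t = s ∧ a g t = c :=
  eq_and_eq_of_forall_mul_apply_eq (hG.weight_pos g hg t).ne' fun f => by
    rw [← hG.apply_eq g hg, h]

theorem symbol_one_apply_and_weight_one (t : X) : φ 1 t = t ∧ a 1 t = 1 :=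
  hG.symbol_eq_and_weight_eq G.one_mem fun f => (one_mul (f t)).symm

theorem symbol_mul_apply_and_weight_mul {g h : C₀(X, ℝ) ≃L[ℝ] C₀(X, ℝ)} (hg : g ∈ G) (hh : h ∈ G)
    (t : X) : φ (g * h) t = φ h (φ g t) ∧ a (g * h) t = a g t * a h (φ g t) :=
  hG.symbol_eq_and_weight_eq (G.mul_mem hg hh) fun f => by
    rw [mul_assoc, ← hG.apply_eq h hh, ← hG.apply_eq g hg]; rfl

theorem symbol_one : φ 1 = 1 := Homeomorph.ext fun t => (hG.symbol_one_apply_and_weight_one t).1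

theorem weight_one (t : X) : a 1 t = 1 := (hG.symbol_one_apply_and_weight_one t).2

theorem symbol_mul {g h : C₀(X, ℝ) ≃L[ℝ] C₀(X, ℝ)} (hg : g ∈ G) (hh : h ∈ G) :
    φ (g * h) = φ h * φ g :=
  Homeomorph.ext fun t => (hG.symbol_mul_apply_and_weight_mul hg hh t).1

theorem weight_mul {g h : C₀(X, ℝ) ≃L[ℝ] C₀(X, ℝ)} (hg : g ∈ G) (hh : h ∈ G) (t : X) :
    a (g * h) t = a g t * a h (φ g t) :=
  (hG.symbol_mul_apply_and_weight_mul hg hh t).2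

theorem symbol_inv {g : C₀(X, ℝ) ≃L[ℝ] C₀(X, ℝ)} (hg : g ∈ G) : φ g⁻¹ = (φ g)⁻¹ := by
  rw [eq_inv_iff_mul_eq_one, ← hG.symbol_mul hg (G.inv_mem hg), mul_inv_cancel, hG.symbol_one]

theorem weight_mul_weight_inv {g : C₀(X, ℝ) ≃L[ℝ] C₀(X, ℝ)} (hg : g ∈ G) (t : X) :
    a g t * a g⁻¹ (φ g t) = 1 := by
  rw [← hG.weight_mul hg (G.inv_mem hg), mul_inv_cancel, hG.weight_one]

/-- The group of the homeomorphisms `φ g`, for `g` in `G`. -/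
def symbolSubgroup : Subgroup (X ≃ₜ X) where
  carrier := φ '' G
  one_mem' := ⟨1, G.one_mem, hG.symbol_one⟩
  mul_mem' := by
    rintro _ _ ⟨g, hg, rfl⟩ ⟨h, hh, rfl⟩
    exact ⟨h * g, G.mul_mem hh hg, hG.symbol_mul hh hg⟩
  inv_mem' := by
    rintro _ ⟨g, hg, rfl⟩
    exact ⟨g⁻¹, G.inv_mem hg, hG.symbol_inv hg⟩

theorem mem_symbolSubgroup {ψ : X ≃ₜ X} : ψ ∈ hG.symbolSubgroup ↔ ∃ g ∈ G, φ g = ψ := Iff.rfl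

end Symbols

section InfWeight

variable {X : Type*} [TopologicalSpace X]
  {G : Subgroup (C₀(X, ℝ) ≃L[ℝ] C₀(X, ℝ))} {a : (C₀(X, ℝ) ≃L[ℝ] C₀(X, ℝ)) → X → ℝ}
  {φ : (C₀(X, ℝ) ≃L[ℝ] C₀(X, ℝ)) → X ≃ₜ X} (hG : IsWeightedCompositionGroup G a φ)
include hG

theorem bddBelow_range_weight (t : X) : BddBelow (Set.range fun g : G => a g.1 t) :=
  ⟨0, Set.forall_mem_range.2 fun g => (hG.weight_pos g.1 g.2 t).le⟩

theorem infWeight_le_weight {g : C₀(X, ℝ) ≃L[ℝ] C₀(X, ℝ)} (hg : g ∈ G) (t : X) :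
    infWeight G a t ≤ a g t :=
  ciInf_le (hG.bddBelow_range_weight t) ⟨g, hg⟩

theorem apply_eq_mulEquiv_comp {u : (BoundedContinuousFunction X ℝ)ˣ}
    {g : C₀(X, ℝ) ≃L[ℝ] C₀(X, ℝ)} (hg : g ∈ G) (hu : ∀ t, u.1 t = a g t * u.1 (φ g t))
    (f : C₀(X, ℝ)) :
    g f = mulEquiv u (((mulEquiv u).symm f).comp (φ g).toCocompactMap) := by
  ext t
  calc g f t = a g t * f (φ g t) := hG.apply_eq g hg f t
    _ = a g t * u.1 (φ g t) * (mulEquiv u).symm f (φ g t) := by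
      rw [mul_assoc, mul_mulEquiv_symm_apply]
    _ = u.1 t * (mulEquiv u).symm f (φ g t) := by rw [← hu]

variable [T2Space X] [LocallyCompactSpace X]

theorem weight_le {C : ℝ} (hC : ∀ g ∈ G, ∀ x, ‖g x‖ ≤ C * ‖x‖) {g : C₀(X, ℝ) ≃L[ℝ] C₀(X, ℝ)}
    (hg : g ∈ G) (t : X) : a g t ≤ C := by
  obtain ⟨e, heI, het, -⟩ := exists_c0_bump_at isOpen_univ (Set.mem_univ (φ g t))
  have hnorm : ‖e‖ = 1 := by
    refine le_antisymm (norm_le_of_forall_abs_apply_le zero_le_one fun u => ?_) ?_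
    · exact abs_le.2 ⟨by linarith [(heI u).1], (heI u).2⟩
    · simpa [het] using abs_apply_le_norm e (φ g t)
  calc a g t = g e t := by rw [hG.apply_eq g hg, het, mul_one]
    _ ≤ ‖g e‖ := (le_abs_self _).trans (abs_apply_le_norm _ t)
    _ ≤ C := by simpa [hnorm] using hC g hg e

theorem bound_pos {C : ℝ} (hC : ∀ g ∈ G, ∀ x, ‖g x‖ ≤ C * ‖x‖) (t : X) : 0 < C :=
  (hG.weight_pos 1 G.one_mem t).trans_le (hG.weight_le hC G.one_mem t)

theorem inv_le_weight {C : ℝ} (hC : ∀ g ∈ G, ∀ x, ‖g x‖ ≤ C * ‖x‖)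
    {g : C₀(X, ℝ) ≃L[ℝ] C₀(X, ℝ)} (hg : g ∈ G) (t : X) : C⁻¹ ≤ a g t := by
  rw [inv_le_iff_one_le_mul₀ (hG.bound_pos hC t), ← hG.weight_mul_weight_inv hg t]
  exact mul_le_mul_of_nonneg_left (hG.weight_le hC (G.inv_mem hg) _) (hG.weight_pos g hg t).le

theorem infWeight_le_weight_mul {g : C₀(X, ℝ) ≃L[ℝ] C₀(X, ℝ)} (hg : g ∈ G) (t : X) :
    infWeight G a t ≤ a g t * infWeight G a (φ g t) := by
  have hpos := hG.weight_pos g hg t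
  refine (div_le_iff₀' hpos).1 (le_ciInf fun h => (div_le_iff₀' hpos).2 ?_)
  rw [← hG.weight_mul hg h.2]
  exact hG.infWeight_le_weight (G.mul_mem hg h.2) t

theorem infWeight_eq_weight_mul {g : C₀(X, ℝ) ≃L[ℝ] C₀(X, ℝ)} (hg : g ∈ G) (t : X) :
    infWeight G a t = a g t * infWeight G a (φ g t) := by
  refine le_antisymm (hG.infWeight_le_weight_mul hg t) ?_
  have hinv : infWeight G a (φ g t) ≤ a g⁻¹ (φ g t) * infWeight G a t := by
    simpa [hG.symbol_inv hg] using hG.infWeight_le_weight_mul (G.inv_mem hg) (φ g t)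
  calc a g t * infWeight G a (φ g t) ≤ a g t * (a g⁻¹ (φ g t) * infWeight G a t) :=
        mul_le_mul_of_nonneg_left hinv (hG.weight_pos g hg t).le
    _ = infWeight G a t := by rw [← mul_assoc, hG.weight_mul_weight_inv hg, one_mul]

theorem inv_le_infWeight {C : ℝ} (hC : ∀ g ∈ G, ∀ x, ‖g x‖ ≤ C * ‖x‖) (t : X) :
    C⁻¹ ≤ infWeight G a t :=
  le_ciInf fun g => hG.inv_le_weight hC g.2 t

theorem infWeight_pos {C : ℝ} (hC : ∀ g ∈ G, ∀ x, ‖g x‖ ≤ C * ‖x‖) (t : X) :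
    0 < infWeight G a t :=
  (inv_pos.2 (hG.bound_pos hC t)).trans_le (hG.inv_le_infWeight hC t)

end InfWeight

section Normalization

variable {X : Type*} [UniformSpace X] [T2Space X] [LocallyCompactSpace X]
  {G : Subgroup (C₀(X, ℝ) ≃L[ℝ] C₀(X, ℝ))} {a : (C₀(X, ℝ) ≃L[ℝ] C₀(X, ℝ)) → X → ℝ}
  {φ : (C₀(X, ℝ) ≃L[ℝ] C₀(X, ℝ)) → X ≃ₜ X} (hG : IsWeightedCompositionGroup G a φ)
include hG

theorem exists_units_eq_infWeight {C : ℝ} (hC : ∀ g ∈ G, ∀ x, ‖g x‖ ≤ C * ‖x‖)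
    (ha : Equicontinuous fun g : G => a g.1) :
    ∃ u : (BoundedContinuousFunction X ℝ)ˣ, ∀ t, u.1 t = infWeight G a t := by
  rcases isEmpty_or_nonempty X with hX | ⟨⟨t₀⟩⟩
  · exact ⟨1, isEmptyElim⟩
  exact exists_units_boundedContinuousFunction
    (continuous_iInf_of_equicontinuous ha hG.bddBelow_range_weight) (inv_pos.2 (hG.bound_pos hC t₀))
    (hG.inv_le_infWeight hC)
    fun t => (hG.infWeight_le_weight G.one_mem t).trans_eq (hG.weight_one t)

theorem equicontinuous_symbolSubgroup (hφ : Equicontinuous fun g : G => ⇑(φ g.1)) :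
    Equicontinuous fun γ : hG.symbolSubgroup => ⇑γ.1 := fun s V hV => by
  filter_upwards [hφ s V hV] with t ht
  rintro ⟨_, g, hg, rfl⟩
  exact ht ⟨g, hg⟩

variable {u : (BoundedContinuousFunction X ℝ)ˣ}

/- The operators `g k` converge strongly to the conjugate of composition with `ψ` under
multiplication by `u`. -/
theorem mem_symbolSubgroup_of_tendsto (hu0 : ∀ t, 0 < u.1 t)
    (hu : ∀ g ∈ G, ∀ t, u.1 t = a g t * u.1 (φ g t)) (hφ : Equicontinuous fun g : G => ⇑(φ g.1))
    (hcl : ∀ g : ℕ → C₀(X, ℝ) ≃L[ℝ] C₀(X, ℝ), (∀ n, g n ∈ G) →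
      ∀ T : C₀(X, ℝ) ≃L[ℝ] C₀(X, ℝ),
        (∀ f₁ f₂ : C₀(X, ℝ), T (c0sup f₁ f₂) = c0sup (T f₁) (T f₂)) →
        (∀ f, Tendsto (fun n => ‖g n f - T f‖) atTop (𝓝 0)) → T ∈ G)
    (γ : ℕ → hG.symbolSubgroup) (ψ : X ≃ₜ X)
    (hlim : ∀ s, Tendsto (fun n => (γ n).1 s) atTop (𝓝 (ψ s))) : ψ ∈ hG.symbolSubgroup := by
  have hΓ := hG.equicontinuous_symbolSubgroup hφ
  choose g hg hgγ using fun n => (γ n).2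
  set S := (mulEquiv u).symm.trans ((compEquiv ψ).trans (mulEquiv u))
  have hS : ∀ f t, S f t = u.1 t / u.1 (ψ t) * f (ψ t) := fun f t => by
    have hne := units_boundedContinuousFunction_apply_ne_zero u (ψ t)
    calc S f t = u.1 t * (mulEquiv u).symm f (ψ t) := rfl
      _ = u.1 t / u.1 (ψ t) * f (ψ t) := by
        rw [← mul_mulEquiv_symm_apply u f (ψ t)]; field_simp
  have hSG : S ∈ G := by
    refine hcl g hg S (map_c0sup_of_forall_apply_eq_mul (fun t => (div_pos (hu0 t) (hu0 _)).le) hS)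
      fun f => tendsto_iff_norm_sub_tendsto_zero.1 ?_
    have hcomp := tendsto_comp_of_equicontinuous (hΓ.comp γ) (hΓ.comp fun n => (γ n)⁻¹) hlim
      ((mulEquiv u).symm f)
    simp_rw [hG.apply_eq_mulEquiv_comp (hg _) (hu _ (hg _)), hgγ]
    exact ((mulEquiv u).continuous.tendsto _).comp hcomp
  exact ⟨S, hSG, Homeomorph.ext fun t => (hG.symbol_eq_and_weight_eq hSG (hS · t)).1⟩

theorem exists_mem_symbolSubgroup_iff (hu : ∀ g ∈ G, ∀ t, u.1 t = a g t * u.1 (φ g t))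
    {m : X → ℝ} (hm : ∀ t, m t = (u.1 t)⁻¹) (T : C₀(X, ℝ) → C₀(X, ℝ)) :
    (∃ γ ∈ hG.symbolSubgroup, ∀ x s, T x s = x (γ s)) ↔
      ∃ g ∈ G, ∀ x x' : C₀(X, ℝ), (∀ t, x' t = (m t)⁻¹ * x t) → ∀ t, T x t = m t * g x' t := by
  have hconj : ∀ g ∈ G, ∀ x x' : C₀(X, ℝ), (∀ t, x' t = (m t)⁻¹ * x t) →
      ∀ t, m t * g x' t = x (φ g t) := fun g hg x x' hx t => by
    rw [hG.apply_eq g hg, hx, hm, hm, inv_inv, ← mul_assoc (a g t), ← hu g hg,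
      inv_mul_cancel_left₀ (units_boundedContinuousFunction_apply_ne_zero u t)]
  constructor
  · rintro ⟨_, ⟨g, hg, rfl⟩, hT⟩
    exact ⟨g, hg, fun x x' hx t => (hT x t).trans (hconj g hg x x' hx t).symm⟩
  · rintro ⟨g, hg, hT⟩
    refine ⟨φ g, ⟨g, hg, rfl⟩, fun x t => ?_⟩
    have hx : ∀ t, mulEquiv u x t = (m t)⁻¹ * x t := fun t => by
      rw [mulEquiv_apply, hm, inv_inv]
    rw [hT x _ hx, hconj g hg x _ hx]

end Normalization

end IsWeightedCompositionGroup

theorem stmt18_general {X : Type*} [MetricSpace X] [TopologicalSpace.SeparableSpace X]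
    [LocallyCompactSpace X] (G : Subgroup (C₀(X, ℝ) ≃L[ℝ] C₀(X, ℝ)))
    (C : ℝ) (h_bdd : ∀ g ∈ G, ∀ x : C₀(X, ℝ), ‖g x‖ ≤ C * ‖x‖)
    (a : (C₀(X, ℝ) ≃L[ℝ] C₀(X, ℝ)) → X → ℝ)
    (φ : (C₀(X, ℝ) ≃L[ℝ] C₀(X, ℝ)) → X ≃ₜ X)
    (hG : IsWeightedCompositionGroup G a φ)
    (ha_equi : ∀ K : Set X, IsCompact K → ∀ ε > 0, ∃ δ > 0, ∀ s ∈ K, ∀ t ∈ K,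
      dist s t < δ → ∀ g ∈ G, |a g s - a g t| < ε)
    (hφ_equi : ∀ K : Set X, IsCompact K → ∀ ε > 0, ∃ δ > 0, ∀ s ∈ K, ∀ t ∈ K,
      dist s t < δ → ∀ g ∈ G, dist (φ g s) (φ g t) < ε)
    (h_nd : Nonempty X → ∃ t : X, IsNowhereDense {z : X | ∃ g ∈ G, φ g t = z})
    (h_closed : ∀ gn : ℕ → C₀(X, ℝ) ≃L[ℝ] C₀(X, ℝ), (∀ n, gn n ∈ G) →
      ∀ T : C₀(X, ℝ) ≃L[ℝ] C₀(X, ℝ),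
        (∀ f₁ f₂ : C₀(X, ℝ), T (c0sup f₁ f₂) = c0sup (T f₁) (T f₂)) →
        (∀ f : C₀(X, ℝ), Tendsto (fun n => ‖gn n f - T f‖) atTop (𝓝 0)) →
        T ∈ G)
    (m : X → ℝ) (hm : ∀ t, m t = (⨅ g : G, a g.1 t)⁻¹) :
    ∃ N : C₀(X, ℝ) → ℝ,
      (∀ x y : C₀(X, ℝ), N (x + y) ≤ N x + N y) ∧
      (∀ (c : ℝ) (x : C₀(X, ℝ)), N (c • x) = |c| * N x) ∧
      (∀ x y : C₀(X, ℝ), (∀ t, |x t| ≤ |y t|) → N x ≤ N y) ∧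
      (∃ c > 0, ∃ C'' : ℝ, ∀ x : C₀(X, ℝ), c * ‖x‖ ≤ N x ∧ N x ≤ C'' * ‖x‖) ∧
      (∀ T : C₀(X, ℝ) ≃L[ℝ] C₀(X, ℝ),
        (∀ f₁ f₂ : C₀(X, ℝ), T (c0sup f₁ f₂) = c0sup (T f₁) (T f₂)) →
        ((∀ x : C₀(X, ℝ), N (T x) = N x) ↔
          ∃ g ∈ G, ∀ x x' : C₀(X, ℝ), (∀ t, x' t = (m t)⁻¹ * x t) →
            ∀ t, T x t = m t * g x' t)) := by
  have ha : Equicontinuous fun g : G => a g.1 := equicontinuous_of_forall_isCompact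
    (by simpa only [Subtype.forall, Real.dist_eq] using ha_equi)
  have hφ : Equicontinuous fun g : G => ⇑(φ g.1) := equicontinuous_of_forall_isCompact
    (by simpa only [Subtype.forall] using hφ_equi)
  obtain ⟨u, hu⟩ := hG.exists_units_eq_infWeight h_bdd ha
  have hu0 : ∀ t, 0 < u.1 t := fun t => hu t ▸ hG.infWeight_pos h_bdd t
  have hcocycle : ∀ g ∈ G, ∀ t, u.1 t = a g t * u.1 (φ g t) := fun g hg t => by
    rw [hu, hu, hG.infWeight_eq_weight_mul hg]
  obtain ⟨N, hmono, hequiv, hiso⟩ := exists_seminorm_isometry_iff_exists_mem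
    (hG.equicontinuous_symbolSubgroup hφ)
    (hG.mem_symbolSubgroup_of_tendsto hu0 hcocycle hφ h_closed)
    (by simpa [hG.mem_symbolSubgroup] using h_nd)
  refine ⟨N, map_add_le_add N, map_smul_eq_mul N, hmono, ⟨1, one_pos, 3, by simpa using hequiv⟩,
    fun T hT => (hiso T hT).trans ?_⟩
  exact hG.exists_mem_symbolSubgroup_iff hcocycle (fun t => hu t ▸ hm t) T

/-- **Corollary 6.6 (display of bounded groups).** Let `X` be a locally compact Polish
space and `G` a bounded relatively SOT-closed group of lattice isomorphisms of `C₀(X)`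
with weights `a_g` and homeomorphisms `φ_g`, both families equicontinuous on compact sets
and all `φ_g`-orbits nowhere dense. Let `m_G(t) = (inf_{g ∈ G} a_g(t))⁻¹`. Then there is
an equivalent lattice norm `N` on `C₀(X)` whose group of `N`-isometric lattice
isomorphisms is exactly `{x ↦ m_G · g(m_G⁻¹ · x) : g ∈ G}`. -/
theorem stmt18 {X : Type*} [MetricSpace X] [PolishSpace X] [LocallyCompactSpace X]
    (G : Set (C₀(X, ℝ) ≃L[ℝ] C₀(X, ℝ)))
    (h_id : ContinuousLinearEquiv.refl ℝ C₀(X, ℝ) ∈ G)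
    (h_comp : ∀ g ∈ G, ∀ h ∈ G, g.trans h ∈ G)
    (h_inv : ∀ g ∈ G, g.symm ∈ G)
    (h_lat : ∀ g ∈ G, ∀ f₁ f₂ : C₀(X, ℝ), g (c0sup f₁ f₂) = c0sup (g f₁) (g f₂))
    (C : ℝ) (hC : 1 ≤ C)
    (h_bdd : ∀ g ∈ G, ∀ x : C₀(X, ℝ), C⁻¹ * ‖x‖ ≤ ‖g x‖ ∧ ‖g x‖ ≤ C * ‖x‖)
    (a : (C₀(X, ℝ) ≃L[ℝ] C₀(X, ℝ)) → X → ℝ)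
    (φ : (C₀(X, ℝ) ≃L[ℝ] C₀(X, ℝ)) → X ≃ₜ X)
    (hrep : ∀ g ∈ G, ∀ (f : C₀(X, ℝ)) (t : X), g f t = a g t * f (φ g t))
    (ha_cont : ∀ g ∈ G, Continuous (a g))
    (ha_pos : ∀ g ∈ G, ∃ c > 0, ∀ t, c ≤ a g t)
    (ha_bd : ∀ g ∈ G, ∃ C' : ℝ, ∀ t, a g t ≤ C')
    (ha_equi : ∀ K : Set X, IsCompact K → ∀ ε > 0, ∃ δ > 0, ∀ s ∈ K, ∀ t ∈ K,
      dist s t < δ → ∀ g ∈ G, |a g s - a g t| < ε)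
    (hφ_equi : ∀ K : Set X, IsCompact K → ∀ ε > 0, ∃ δ > 0, ∀ s ∈ K, ∀ t ∈ K,
      dist s t < δ → ∀ g ∈ G, dist (φ g s) (φ g t) < ε)
    (h_nd : ∀ t : X, IsNowhereDense {z : X | ∃ g ∈ G, φ g t = z})
    (h_closed : ∀ gn : ℕ → C₀(X, ℝ) ≃L[ℝ] C₀(X, ℝ), (∀ n, gn n ∈ G) →
      ∀ T : C₀(X, ℝ) ≃L[ℝ] C₀(X, ℝ),
        (∀ f₁ f₂ : C₀(X, ℝ), T (c0sup f₁ f₂) = c0sup (T f₁) (T f₂)) →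
        (∀ f : C₀(X, ℝ), Tendsto (fun n => ‖gn n f - T f‖) atTop (𝓝 0)) →
        T ∈ G)
    (m : X → ℝ) (hm : ∀ t, m t = (⨅ g : G, a g.1 t)⁻¹) :
    ∃ N : C₀(X, ℝ) → ℝ,
      (∀ x y : C₀(X, ℝ), N (x + y) ≤ N x + N y) ∧
      (∀ (c : ℝ) (x : C₀(X, ℝ)), N (c • x) = |c| * N x) ∧
      (∀ x y : C₀(X, ℝ), (∀ t, |x t| ≤ |y t|) → N x ≤ N y) ∧
      (∃ c > 0, ∃ C'' : ℝ, ∀ x : C₀(X, ℝ), c * ‖x‖ ≤ N x ∧ N x ≤ C'' * ‖x‖) ∧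
      (∀ T : C₀(X, ℝ) ≃L[ℝ] C₀(X, ℝ),
        (∀ f₁ f₂ : C₀(X, ℝ), T (c0sup f₁ f₂) = c0sup (T f₁) (T f₂)) →
        ((∀ x : C₀(X, ℝ), N (T x) = N x) ↔
          ∃ g ∈ G, ∀ x x' : C₀(X, ℝ), (∀ t, x' t = (m t)⁻¹ * x t) →
            ∀ t, T x t = m t * g x' t)) :=
  stmt18_general ⟨⟨⟨G, fun hg hh => h_comp _ hh _ hg⟩, h_id⟩, h_inv _⟩ C
    (fun g hg x => (h_bdd g hg x).2) a φ
    ⟨hrep, fun g hg t => let ⟨_, hc, h⟩ := ha_pos g hg; hc.trans_le (h t)⟩ ha_equi hφ_equi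
    (fun ⟨t⟩ => ⟨t, h_nd t⟩) h_closed m hm

end
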